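/- arXiv:2007.12625 — 3 statements merged into one kernel-verified Lean document; each statement's English description precedes it below -/
import Mathlib

section
/- Convergence of the deterministic accelerated zeroth-order Frank–Wolfe method (Acc-ZO-FW): let T ≥ 3 be an integer, set the step size η = T^{-1/2}, the smoothing parameter μ = d^{-1/2} T^{-1/2}, and run the momentum Frank–Wolfe iteration with gradient surrogates v_t = (1/n) ∑_{i=1}^n ∇̂_coo f_i(z_t). If Δ ≥ 0 satisfies f(x) − inf_{y∈X} f(y) ≤ Δ for all x ∈ X, then (1/T) ∑_{t=1}^{T-1} G(z_t) ≤ (Δ + 4LD² + 2DL)/√T + (D L ln T)/T^{3/2}. -/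
open scoped RealInnerProductSpace

/-- The Frank–Wolfe (duality) gap of `f` over `X` at `x`:
`G(x) = sup_{w ∈ X} ⟪w − x, −∇f(x)⟫`. -/
noncomputable def fwGap {d : ℕ} (f : EuclideanSpace ℝ (Fin d) → ℝ)
    (X : Set (EuclideanSpace ℝ (Fin d))) (x : EuclideanSpace ℝ (Fin d)) : ℝ :=
  sSup ((fun w => ⟪w - x, -gradient f x⟫) '' X)

section helpers

variable {E : Type*} [NormedAddCommGroup E] [InnerProductSpace ℝ E]

/-- crude descent inequality -/
theorem aux_mvt [CompleteSpace E] (f : E → ℝ) (hf : Differentiable ℝ f) (p q : E) :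
    ∃ c ∈ segment ℝ p q, f q - f p = ⟪gradient f c, q - p⟫ := by
  obtain ⟨c, hc, h⟩ := domain_mvt (f := f) (f' := fun x => fderiv ℝ f x) (s := Set.univ)
    (x := p) (y := q) (fun x _ => (hf x).hasFDerivAt.hasFDerivWithinAt) convex_univ trivial trivial
  refine ⟨c, hc, ?_⟩
  rw [h, gradient, InnerProductSpace.toDual_symm_apply]

theorem aux_descent [CompleteSpace E] (f : E → ℝ) (hf : Differentiable ℝ f) (L : ℝ) (hL : 0 < L)
    (hLip : ∀ u v, ‖gradient f u - gradient f v‖ ≤ L * ‖u - v‖) (p q : E) :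
    f q ≤ f p + ⟪gradient f p, q - p⟫ + L * ‖q - p‖ ^ 2 := by
  obtain ⟨c, hc, h⟩ := aux_mvt f hf p q
  have h1 : ‖c - p‖ ≤ ‖q - p‖ := norm_sub_le_of_mem_segment hc
  have h2 := real_inner_le_norm (gradient f c - gradient f p) (q - p)
  rw [inner_sub_left] at h2
  have h3 : ‖gradient f c - gradient f p‖ * ‖q - p‖ ≤ L * ‖q - p‖ * ‖q - p‖ := by
    gcongr
    exact (hLip c p).trans (by gcongr)
  nlinarith

theorem aux_main (f : E → ℝ) (g : E → E) (X : Set E) (hXconv : Convex ℝ X)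
    (D L η : ℝ) (hD : 0 < D) (hL : 0 < L) (hη : 0 < η) (hη2 : η * (3 / 2) ≤ 1)
    (hdiam : ∀ u ∈ X, ∀ v ∈ X, ‖u - v‖ ≤ D)
    (hdesc : ∀ p q, f q ≤ f p + ⟪g p, q - p⟫ + L * ‖q - p‖ ^ 2)
    (hLip : ∀ u v, ‖g u - g v‖ ≤ L * ‖u - v‖)
    (x y z w : ℕ → E) (G : ℕ → ℝ)
    (hx0 : x 0 = z 0) (hy0 : y 0 = z 0) (hz0 : z 0 ∈ X)
    (hwX : ∀ t, w t ∈ X)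
    (hG0 : ∀ t, z t ∈ X → 0 ≤ G t)
    (hG : ∀ t, z t ∈ X → ⟪g (z t), w t - z t⟫ ≤ - G t + D * L * η)
    (hxrec : ∀ t : ℕ, x (t + 1)
      = x t + ((1 + 1 / (((t : ℝ) + 1) * ((t : ℝ) + 2))) * η) • (w t - x t))
    (hyrec : ∀ t : ℕ, y (t + 1) = z t + η • (w t - z t))
    (hzrec : ∀ t : ℕ, z (t + 1)
      = (1 - 1 / ((t : ℝ) + 2)) • y (t + 1) + (1 / ((t : ℝ) + 2)) • x (t + 1)) :
    ∀ t, z t ∈ X ∧ f (z (t + 1)) ≤ f (z t) - η * G t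
      + η ^ 2 * (2 * (D * L) + 4 * (L * D ^ 2)) := by
  have hthpos : ∀ t : ℕ, 0 < 1 / (((t : ℝ) + 1) * ((t : ℝ) + 2)) := fun t => by positivity
  have hthle : ∀ t : ℕ, 1 / (((t : ℝ) + 1) * ((t : ℝ) + 2)) ≤ 1 / 2 := fun t => by
    have : (0 : ℝ) ≤ t := t.cast_nonneg
    apply one_div_le_one_div_of_le (by norm_num); nlinarith
  have halpos : ∀ t : ℕ, 0 < 1 / ((t : ℝ) + 2) := fun t => by positivity
  have halle : ∀ t : ℕ, 1 / ((t : ℝ) + 2) ≤ 1 / 2 := fun t => by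
    have : (0 : ℝ) ≤ t := t.cast_nonneg
    apply one_div_le_one_div_of_le (by norm_num); linarith
  have hgam : ∀ t : ℕ, 0 ≤ (1 + 1 / (((t : ℝ) + 1) * ((t : ℝ) + 2))) * η ∧
      (1 + 1 / (((t : ℝ) + 1) * ((t : ℝ) + 2))) * η ≤ 1 := fun t => by
    have := hthpos t
    have := hthle t
    constructor
    · positivity
    · nlinarith
  have hmem : ∀ t, x t ∈ X ∧ z t ∈ X := by
    intro t
    induction t with
    | zero => exact ⟨hx0 ▸ hz0, hz0⟩
    | succ t ih =>
      have h1 : x (t + 1) ∈ X := by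
        rw [hxrec]
        exact hXconv.add_smul_sub_mem ih.1 (hwX t) ⟨(hgam t).1, (hgam t).2⟩
      have h2 : y (t + 1) ∈ X := by
        rw [hyrec]
        exact hXconv.add_smul_sub_mem ih.2 (hwX t) ⟨hη.le, by linarith⟩
      refine ⟨h1, ?_⟩
      rw [hzrec]
      have := halle t
      exact hXconv h2 h1 (by linarith) (halpos t).le (by ring)
  have hxz : ∀ t : ℕ, x t - z t = ((t : ℝ) / (t + 1)) • (x t - y t) := by
    intro t
    cases t with
    | zero => simp [hx0]
    | succ t =>
      have : (((t + 1 : ℕ) : ℝ) / ((t + 1 : ℕ) + 1)) = 1 - 1 / ((t : ℝ) + 2) := by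
        push_cast; field_simp; ring
      rw [this, hzrec]
      module
  have hwz : ∀ t, ‖w t - z t‖ ≤ D := fun t => hdiam _ (hwX t) _ (hmem t).2
  have herec : ∀ t : ℕ, x (t + 1) - y (t + 1) =
      ((1 - (1 + 1 / (((t : ℝ) + 1) * ((t : ℝ) + 2))) * η) * ((t : ℝ) / (t + 1))) • (x t - y t)
      + (1 / (((t : ℝ) + 1) * ((t : ℝ) + 2)) * η) • (w t - z t) := by
    intro t
    rw [mul_smul, ← hxz, hxrec, hyrec]
    module
  have hzdiff : ∀ t : ℕ, z (t + 1) - z t =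
      (η * (1 + 1 / ((t : ℝ) + 2) * (1 / (((t : ℝ) + 1) * ((t : ℝ) + 2))))) • (w t - z t)
      + (1 / ((t : ℝ) + 2) * ((1 - (1 + 1 / (((t : ℝ) + 1) * ((t : ℝ) + 2))) * η)
        * ((t : ℝ) / (t + 1)))) • (x t - y t) := by
    intro t
    rw [← mul_assoc, mul_smul _ ((t : ℝ) / (t + 1)), ← hxz, hzrec, hxrec, hyrec]
    module
  have hρ : ∀ t : ℕ, 0 ≤ (1 - (1 + 1 / (((t : ℝ) + 1) * ((t : ℝ) + 2))) * η) * ((t : ℝ) / (t + 1)) ∧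
      (1 - (1 + 1 / (((t : ℝ) + 1) * ((t : ℝ) + 2))) * η) * ((t : ℝ) / (t + 1)) ≤
        (t : ℝ) / (t + 1) := by
    intro t
    have h1 := hgam t
    have h2 : (0 : ℝ) ≤ (t : ℝ) / (t + 1) := by positivity
    constructor
    · apply mul_nonneg _ h2; linarith [h1.2]
    · nlinarith [mul_nonneg h1.1 h2]
  -- bound on e
  have he : ∀ t : ℕ, ‖x t - y t‖ ≤ η * D / 2 := by
    intro t
    induction t with
    | zero => simp [hx0, hy0]; positivity
    | succ t ih =>
      rw [herec]
      refine (norm_add_le _ _).trans ?_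
      rw [norm_smul, norm_smul, Real.norm_of_nonneg (hρ t).1, Real.norm_of_nonneg (by positivity)]
      calc _ ≤ (t : ℝ) / (t + 1) * (η * D / 2) +
            1 / (((t : ℝ) + 1) * ((t : ℝ) + 2)) * η * D := by
            have := (hρ t).2
            have := hwz t
            gcongr
        _ = η * D / 2 * ((t : ℝ) / (t + 1) + 2 * (1 / (((t : ℝ) + 1) * ((t : ℝ) + 2)))) := by ring
        _ ≤ η * D / 2 * 1 := by
            gcongr
            have : (0 : ℝ) ≤ t := t.cast_nonneg
            rw [← sub_nonneg]
            have : 1 - ((t : ℝ) / (t + 1) + 2 * (1 / (((t : ℝ) + 1) * ((t : ℝ) + 2)))) =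
              t / (((t : ℝ) + 1) * ((t : ℝ) + 2)) := by field_simp; ring
            rw [this]; positivity
        _ = _ := mul_one _
  have hc : ∀ t : ℕ, ‖z (t + 1) - z t‖ ≤ 3 / 2 * (η * D) := by
    intro t
    rw [hzdiff]
    refine (norm_add_le _ _).trans ?_
    have h1 := hthpos t
    have h2 := hthle t
    have h3 := halpos t
    have h4 := halle t
    have h5 := hρ t
    have h6 : (t : ℝ) / (t + 1) ≤ 1 := by
      rw [div_le_one (by positivity)]; linarith
    rw [norm_smul, norm_smul, Real.norm_of_nonneg (by positivity),
      Real.norm_of_nonneg (mul_nonneg h3.le h5.1)]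
    calc _ ≤ η * (1 + 1 / 2 * (1 / 2)) * D + 1 / 2 * 1 * (η * D / 2) := by
            have := h5.2.trans h6
            have := h5.1
            have := he t
            have := hwz t
            gcongr
      _ = _ := by ring
  -- bound on A
  have hA : ∀ t : ℕ, ⟪g (z t), x t - y t⟫ ≤
      η ^ 2 * (D * L / 2) + L * η ^ 2 * D ^ 2 * (3 / 8) * (t + 1) := by
    intro t
    induction t with
    | zero => simp [hx0, hy0]; positivity
    | succ t ih =>
      have h1 : ⟪g (z (t + 1)), x (t + 1) - y (t + 1)⟫ = ⟪g (z t), x (t + 1) - y (t + 1)⟫ +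
        ⟪g (z (t + 1)) - g (z t), x (t + 1) - y (t + 1)⟫ := by
        rw [inner_sub_left]; ring
      have h2 : ⟪g (z (t + 1)) - g (z t), x (t + 1) - y (t + 1)⟫ ≤
          L * (3 / 2 * (η * D)) * (η * D / 2) := by
        refine (real_inner_le_norm _ _).trans ?_
        have := he (t + 1)
        have := (hLip (z (t + 1)) (z t)).trans (mul_le_mul_of_nonneg_left (hc t) hL.le)
        gcongr
      have h3 : ⟪g (z t), w t - z t⟫ ≤ D * L * η := by
        linarith [hG t (hmem t).2, hG0 t (hmem t).2]
      rw [h1, herec, inner_add_right, real_inner_smul_right, real_inner_smul_right, ← herec]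
      have hB : 0 ≤ η ^ 2 * (D * L / 2) + L * η ^ 2 * D ^ 2 * (3 / 8) * (t + 1) := by positivity
      have h4 := (mul_le_mul_of_nonneg_left ih (hρ t).1).trans
        (mul_le_mul_of_nonneg_right (hρ t).2 hB)
      have h5 := mul_le_mul_of_nonneg_left h3 (mul_pos (hthpos t) hη).le
      have h6 : (t : ℝ) / (t + 1) * (η ^ 2 * (D * L / 2) + L * η ^ 2 * D ^ 2 * (3 / 8) * (t + 1))
          = (1 - 1 / ((t : ℝ) + 1)) * (η ^ 2 * (D * L / 2)) + L * η ^ 2 * D ^ 2 * (3 / 8) * t := by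
        field_simp; ring
      have h7 : 1 / (((t : ℝ) + 1) * ((t : ℝ) + 2)) * η * (D * L * η) ≤
          1 / ((t : ℝ) + 1) * (η ^ 2 * (D * L / 2)) := by
        have : 1 / (((t : ℝ) + 1) * ((t : ℝ) + 2)) * η * (D * L * η) =
          1 / ((t : ℝ) + 1) * (η ^ 2 * (D * L * (1 / ((t : ℝ) + 2)))) := by field_simp
        rw [this]
        have := halle t
        rw [div_eq_mul_one_div (D * L) 2]
        gcongr
      push_cast
      linarith
  intro t
  refine ⟨(hmem t).2, ?_⟩
  have hd := hdesc (z t) (z (t + 1))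
  have hsq : L * ‖z (t + 1) - z t‖ ^ 2 ≤ L * (3 / 2 * (η * D)) ^ 2 := by
    have := hc t
    gcongr
  have hin : ⟪g (z t), z (t + 1) - z t⟫ ≤ - (η * G t) + 5 / 4 * (η ^ 2 * (D * L)) +
      1 / 2 * (η ^ 2 * (D * L / 2)) + L * η ^ 2 * D ^ 2 * (3 / 8) := by
    rw [hzdiff, inner_add_right, real_inner_smul_right, real_inner_smul_right]
    have h1 := hthpos t
    have h2 := hthle t
    have h3 := halpos t
    have h4 := halle t
    have h5 := hρ t
    have hG0' := hG0 t (hmem t).2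
    have hk0 : 0 ≤ 1 / ((t : ℝ) + 2) * (1 / (((t : ℝ) + 1) * ((t : ℝ) + 2))) := by positivity
    have hk1 : 1 / ((t : ℝ) + 2) * (1 / (((t : ℝ) + 1) * ((t : ℝ) + 2))) ≤ 1 / 4 := by
      calc _ ≤ 1 / 2 * (1 / 2 : ℝ) := by gcongr
        _ = _ := by norm_num
    have hw := mul_le_mul_of_nonneg_left (hG t (hmem t).2)
      (mul_nonneg hη.le (add_nonneg zero_le_one hk0))
    have hw2 : η * (1 + 1 / ((t : ℝ) + 2) * (1 / (((t : ℝ) + 1) * ((t : ℝ) + 2)))) *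
        (- G t + D * L * η) ≤ - (η * G t) + 5 / 4 * (η ^ 2 * (D * L)) := by
      generalize 1 / ((t : ℝ) + 2) * (1 / (((t : ℝ) + 1) * ((t : ℝ) + 2))) = k at hk0 hk1
      have e1 : 0 ≤ η * k * G t := by positivity
      have e2 : 0 ≤ (1 / 4 - k) * (η ^ 2 * (D * L)) := mul_nonneg (by linarith) (by positivity)
      linarith
    have hB : 0 ≤ η ^ 2 * (D * L / 2) + L * η ^ 2 * D ^ 2 * (3 / 8) * (t + 1) := by positivity
    have hr := mul_le_mul_of_nonneg_left (hA t) (mul_nonneg h3.le h5.1)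
    have h6 : (t : ℝ) / (t + 1) ≤ 1 := by
      rw [div_le_one (by positivity)]; linarith
    have hr2 := mul_le_mul_of_nonneg_right
      (mul_le_mul_of_nonneg_left (h5.2.trans h6) h3.le) hB
    have hr3 : 1 / ((t : ℝ) + 2) * 1 * (η ^ 2 * (D * L / 2) +
        L * η ^ 2 * D ^ 2 * (3 / 8) * (t + 1)) ≤
        1 / 2 * (η ^ 2 * (D * L / 2)) + L * η ^ 2 * D ^ 2 * (3 / 8) := by
      have e1 : 1 / ((t : ℝ) + 2) * (η ^ 2 * (D * L / 2)) ≤ 1 / 2 * (η ^ 2 * (D * L / 2)) := by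
        gcongr
      have e2 : L * η ^ 2 * D ^ 2 * (3 / 8) * (1 / ((t : ℝ) + 2) * (t + 1)) ≤
          L * η ^ 2 * D ^ 2 * (3 / 8) * 1 := by
        gcongr
        rw [one_div_mul_eq_div, div_le_one (by positivity)]; linarith
      linarith
    linarith
  have p1 : 0 < η ^ 2 * (D * L) := by positivity
  have p2 : 0 < L * η ^ 2 * D ^ 2 := by positivity
  linarith

end helpers

theorem aux_coord {d : ℕ} (f : EuclideanSpace ℝ (Fin d) → ℝ) (hf : Differentiable ℝ f)
    (L : ℝ) (hL : 0 < L)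
    (hLip : ∀ u v, ‖gradient f u - gradient f v‖ ≤ L * ‖u - v‖)
    (μ η : ℝ) (hμ : 0 < μ) (hη : 0 < η) (hμη : d * μ ^ 2 = η ^ 2)
    (z : EuclideanSpace ℝ (Fin d)) :
    ‖(∑ j : Fin d, ((f (z + μ • EuclideanSpace.single j 1)
          - f (z - μ • EuclideanSpace.single j 1)) / (2 * μ)) •
        (EuclideanSpace.single j 1 : EuclideanSpace ℝ (Fin d))) - gradient f z‖ ≤ L * η := by
  have key : ∀ j : Fin d, |(f (z + μ • EuclideanSpace.single j 1)
          - f (z - μ • EuclideanSpace.single j 1)) / (2 * μ) - gradient f z j| ≤ L * μ := by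
    intro j
    set e : EuclideanSpace ℝ (Fin d) := EuclideanSpace.single j 1 with he
    have hen : ‖e‖ = 1 := by simp [he]
    obtain ⟨c, hc, h⟩ := aux_mvt f hf (z - μ • e) (z + μ • e)
    have hcz : ‖c - z‖ ≤ μ := by
      have hb := (convex_closedBall z μ).segment_subset (x := z - μ • e) (y := z + μ • e)
        (by simp [norm_smul, hen, abs_of_pos hμ])
        (by simp [norm_smul, hen, abs_of_pos hμ]) hc
      exact mem_closedBall_iff_norm.1 hb
    have h2 : z + μ • e - (z - μ • e) = (2 * μ) • e := by module
    rw [h, h2, real_inner_smul_right, mul_div_cancel_left₀ _ (by positivity)]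
    have h3 : gradient f z j = ⟪gradient f z, e⟫ := by
      rw [he, EuclideanSpace.inner_single_right]; simp
    rw [h3, ← inner_sub_left]
    refine (abs_real_inner_le_norm _ _).trans ?_
    rw [hen, mul_one]
    exact (hLip c z).trans (by gcongr)
  rw [EuclideanSpace.norm_eq]
  apply Real.sqrt_le_iff.2 ⟨by positivity, ?_⟩
  calc _ ≤ ∑ j : Fin d, (L * μ) ^ 2 := by
        apply Finset.sum_le_sum
        intro j _
        have hj := key j
        rw [Real.norm_eq_abs]
        gcongr
        refine le_trans (le_of_eq ?_) hj
        congr 1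
        rw [PiLp.sub_apply, WithLp.ofLp_sum, Finset.sum_apply]
        simp [Pi.single_apply]
    _ = _ := by
        simp only [Finset.sum_const, Finset.card_univ, Fintype.card_fin, nsmul_eq_mul]
        rw [mul_pow, mul_pow, ← hμη]; ring

/-- Convergence of the deterministic accelerated zeroth-order Frank–Wolfe method
(Acc-ZO-FW): with `η = T^{-1/2}`, `μ = d^{-1/2} T^{-1/2}`, and gradient surrogates
`v t = (1/n) ∑ i, ∇̂_coo f_i (z t)`, one has
`(1/T) ∑_{t=1}^{T-1} G(z t) ≤ (Δ + 4LD² + 2DL)/√T + D L ln T / T^{3/2}`. -/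
theorem acc_zo_fw_convergence
    (d : ℕ) (hd : 1 ≤ d)
    (X : Set (EuclideanSpace ℝ (Fin d))) (hXne : X.Nonempty)
    (hXcomp : IsCompact X) (hXconv : Convex ℝ X)
    (D : ℝ) (hD : 0 < D)
    (hdiam : ∀ u ∈ X, ∀ v ∈ X, ‖u - v‖ ≤ D)
    (n : ℕ) (hn : 1 ≤ n)
    (fs : Fin n → EuclideanSpace ℝ (Fin d) → ℝ)
    (L : ℝ) (hL : 0 < L)
    (hdiff : ∀ i, Differentiable ℝ (fs i))
    (hLip : ∀ i, ∀ u v', ‖gradient (fs i) u - gradient (fs i) v'‖ ≤ L * ‖u - v'‖)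
    (f : EuclideanSpace ℝ (Fin d) → ℝ)
    (hf : f = fun x => (1 / (n : ℝ)) * ∑ i, fs i x)
    (T : ℕ) (hT : 3 ≤ T)
    (η μ : ℝ)
    (hηdef : η = (T : ℝ) ^ (-(1 / 2 : ℝ)))
    (hμdef : μ = (d : ℝ) ^ (-(1 / 2 : ℝ)) * (T : ℝ) ^ (-(1 / 2 : ℝ)))
    (x y z w v : ℕ → EuclideanSpace ℝ (Fin d))
    (hx0 : x 0 = z 0) (hy0 : y 0 = z 0) (hz0 : z 0 ∈ X)
    (hv : ∀ t : ℕ, v t = (1 / (n : ℝ)) • ∑ i, ∑ j : Fin d,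
      ((fs i (z t + μ • EuclideanSpace.single j 1)
          - fs i (z t - μ • EuclideanSpace.single j 1)) / (2 * μ)) •
        EuclideanSpace.single j 1)
    (hwX : ∀ t, w t ∈ X)
    (hwopt : ∀ t, ∀ w' ∈ X, ⟪w', -(v t)⟫ ≤ ⟪w t, -(v t)⟫)
    (hxrec : ∀ t : ℕ, x (t + 1)
      = x t + ((1 + 1 / (((t : ℝ) + 1) * ((t : ℝ) + 2))) * η) • (w t - x t))
    (hyrec : ∀ t : ℕ, y (t + 1) = z t + η • (w t - z t))
    (hzrec : ∀ t : ℕ, z (t + 1)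
      = (1 - 1 / ((t : ℝ) + 2)) • y (t + 1) + (1 / ((t : ℝ) + 2)) • x (t + 1))
    (Δ : ℝ) (hΔ0 : 0 ≤ Δ)
    (hΔ : ∀ x' ∈ X, f x' - sInf (f '' X) ≤ Δ) :
    (1 / (T : ℝ)) * ∑ t ∈ Finset.Ico 1 T, fwGap f X (z t)
      ≤ (Δ + 4 * L * D ^ 2 + 2 * D * L) / Real.sqrt T
        + D * L * Real.log T / (T : ℝ) ^ ((3 : ℝ) / 2) := by
  have hn0 : (0 : ℝ) < n := by exact_mod_cast hn
  have hd0 : (0 : ℝ) < d := by exact_mod_cast hd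
  have hT0 : (0 : ℝ) < T := by exact_mod_cast (by omega : 0 < T)
  have hη0 : 0 < η := by rw [hηdef]; positivity
  have hμ0 : 0 < μ := by rw [hμdef]; positivity
  have hηs : η = 1 / Real.sqrt T := by
    rw [hηdef, Real.rpow_neg hT0.le, Real.sqrt_eq_rpow, one_div (_ ^ _)]
  have hηsq : η ^ 2 * T = 1 := by
    rw [hηs, div_pow, Real.sq_sqrt hT0.le]; field_simp
  have hμs : μ = 1 / Real.sqrt d * η := by
    rw [hμdef, ← hηdef, Real.rpow_neg hd0.le, Real.sqrt_eq_rpow, one_div (_ ^ _)]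
  have hμη : d * μ ^ 2 = η ^ 2 := by
    rw [hμs, mul_pow, div_pow, Real.sq_sqrt hd0.le]; field_simp
  have hη2 : η * (3 / 2) ≤ 1 := by
    have h3 : (3 : ℝ) ≤ T := by exact_mod_cast hT
    have : η ^ 2 * 3 ≤ 1 := by rw [← hηsq]; gcongr
    nlinarith
  have hfd : Differentiable ℝ f := by
    rw [hf]; fun_prop
  have hgrad : ∀ u, gradient f u = (1 / (n : ℝ)) • ∑ i, gradient (fs i) u := by
    intro u
    apply HasGradientAt.gradient
    rw [hasGradientAt_iff_hasFDerivAt, hf]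
    have := (HasFDerivAt.fun_sum (u := Finset.univ)
      (fun i _ => ((hdiff i u).hasGradientAt.hasFDerivAt))).const_mul (1 / (n : ℝ))
    simpa [map_sum] using this
  have hfLip : ∀ u v, ‖gradient f u - gradient f v‖ ≤ L * ‖u - v‖ := by
    intro u v
    rw [hgrad, hgrad, ← smul_sub, ← Finset.sum_sub_distrib, norm_smul,
      Real.norm_of_nonneg (by positivity)]
    calc _ ≤ 1 / (n : ℝ) * ∑ i : Fin n, L * ‖u - v‖ := by
          gcongr
          exact norm_sum_le_of_le _ (fun i _ => hLip i u v)
      _ = _ := by simp; field_simp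
  have hv' : ∀ t, ‖v t - gradient f (z t)‖ ≤ L * η := by
    intro t
    have := aux_coord f hfd L hL hfLip μ η hμ0 hη0 hμη (z t)
    convert this using 3
    rw [hv, Finset.sum_comm, Finset.smul_sum]
    refine Finset.sum_congr rfl fun j _ => ?_
    rw [← Finset.sum_smul, smul_smul, hf, ← Finset.sum_div]
    congr 1
    rw [Finset.sum_sub_distrib]
    ring
  have hbdd : ∀ u, BddAbove ((fun w => ⟪w - u, -gradient f u⟫) '' X) := fun u =>
    (hXcomp.image (by fun_prop)).bddAbove
  have hG0 : ∀ t, z t ∈ X → 0 ≤ fwGap f X (z t) := by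
    intro t ht
    apply le_csSup (hbdd _)
    exact ⟨z t, ht, by simp⟩
  have hG : ∀ t, z t ∈ X → ⟪gradient f (z t), w t - z t⟫ ≤ - fwGap f X (z t) + D * L * η := by
    intro t ht
    have : fwGap f X (z t) ≤ D * L * η - ⟪gradient f (z t), w t - z t⟫ := by
      apply csSup_le (hXne.image _)
      rintro _ ⟨p, hp, rfl⟩
      have h1 := hwopt t p hp
      have h2 : ⟪p - w t, v t - gradient f (z t)⟫ ≤ D * (L * η) := by
        refine (real_inner_le_norm _ _).trans ?_
        have := hdiam p hp _ (hwX t)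
        have := hv' t
        gcongr
      have h3 := real_inner_comm (gradient f (z t)) (w t)
      have h4 := real_inner_comm (gradient f (z t)) (z t)
      simp only [inner_sub_left, inner_sub_right, inner_neg_right] at *
      linarith
    linarith
  have main := aux_main f (gradient f) X hXconv D L η hD hL hη0 hη2 hdiam
    (aux_descent f hfd L hL hfLip) hfLip x y z w (fun t => fwGap f X (z t)) hx0 hy0 hz0 hwX
    hG0 hG hxrec hyrec hzrec
  have hsum : ∀ m : ℕ, η * ∑ t ∈ Finset.Ico 1 (m + 1), fwGap f X (z t) ≤
      f (z 1) - f (z (m + 1)) + m * (η ^ 2 * (2 * (D * L) + 4 * (L * D ^ 2))) := by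
    intro m
    induction m with
    | zero => simp
    | succ m ih =>
      rw [Finset.sum_Ico_succ_top (by omega), mul_add]
      have := (main (m + 1)).2
      push_cast
      linarith
  obtain ⟨m, rfl⟩ : ∃ m, T = m + 1 := ⟨T - 1, by omega⟩
  have hs := hsum m
  have hinf : sInf (f '' X) ≤ f (z (m + 1)) :=
    csInf_le (hXcomp.image hfd.continuous).bddBelow ⟨_, (main (m + 1)).1, rfl⟩
  have h1 := hΔ _ (main 1).1
  have hK : 0 < η ^ 2 * (2 * (D * L) + 4 * (L * D ^ 2)) := by positivity
  have hs2 : η * ∑ t ∈ Finset.Ico 1 (m + 1), fwGap f X (z t) ≤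
      Δ + 4 * L * D ^ 2 + 2 * D * L := by
    have : ((m + 1 : ℕ) : ℝ) * (η ^ 2 * (2 * (D * L) + 4 * (L * D ^ 2))) =
        2 * (D * L) + 4 * (L * D ^ 2) := by
      linear_combination (2 * (D * L) + 4 * (L * D ^ 2)) * hηsq
    push_cast at this
    linarith
  have hlog : 0 ≤ D * L * Real.log ((m + 1 : ℕ) : ℝ) / ((m + 1 : ℕ) : ℝ) ^ ((3 : ℝ) / 2) := by
    have : 0 ≤ Real.log ((m + 1 : ℕ) : ℝ) := Real.log_natCast_nonneg _
    positivity
  have hfin : (1 / ((m + 1 : ℕ) : ℝ)) * ∑ t ∈ Finset.Ico 1 (m + 1), fwGap f X (z t) =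
      η * (η * ∑ t ∈ Finset.Ico 1 (m + 1), fwGap f X (z t)) := by
    have : 1 / ((m + 1 : ℕ) : ℝ) = η ^ 2 := by
      rw [div_eq_iff hT0.ne']; exact hηsq.symm
    rw [this]; ring
  rw [hfin, div_eq_mul_one_div (Δ + 4 * L * D ^ 2 + 2 * D * L), ← hηs, mul_comm _ η]
  have := mul_le_mul_of_nonneg_left hs2 hη0.le
  linarith
end

section
/- Unbiasedness of the uniform smoothing gradient estimator for the smoothed function: f_β is differentiable at every x ∈ ℝ^d, and its gradient satisfies ∇f_β(x) = E_{u ~ Unif(S)}[(d/β)(f(x + βu) − f(x)) u]. -/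
open MeasureTheory

/-- The uniform probability measure (normalized Lebesgue measure) on the closed unit
ball of `ℝ^d`. -/
noncomputable def uniformUnitBall (d : ℕ) : Measure (EuclideanSpace ℝ (Fin d)) :=
  (volume (Metric.closedBall (0 : EuclideanSpace ℝ (Fin d)) 1))⁻¹ •
    volume.restrict (Metric.closedBall (0 : EuclideanSpace ℝ (Fin d)) 1)

/-- The uniform probability measure (normalized surface measure) on the unit sphere
of `ℝ^d`. -/
noncomputable def uniformUnitSphere (d : ℕ) :
    Measure (Metric.sphere (0 : EuclideanSpace ℝ (Fin d)) 1) :=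
  ((volume : Measure (EuclideanSpace ℝ (Fin d))).toSphere Set.univ)⁻¹ •
    (volume : Measure (EuclideanSpace ℝ (Fin d))).toSphere


lemma aux_polar (d : ℕ) (hd : 1 ≤ d) (F : EuclideanSpace ℝ (Fin d) → ℝ) (hF : Integrable F) :
    ∫ w, F w = ∫ r in Set.Ioi (0:ℝ), r ^ (d - 1) *
      ∫ u : Metric.sphere (0 : EuclideanSpace ℝ (Fin d)) 1,
        F (r • (u : EuclideanSpace ℝ (Fin d)))
        ∂(volume : Measure (EuclideanSpace ℝ (Fin d))).toSphere := by
  have hfin : Module.finrank ℝ (EuclideanSpace ℝ (Fin d)) = d := by simp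
  have mp := (volume : Measure (EuclideanSpace ℝ (Fin d))).measurePreserving_homeomorphUnitSphereProd
  rw [hfin] at mp
  set G : Metric.sphere (0 : EuclideanSpace ℝ (Fin d)) 1 × Set.Ioi (0:ℝ) → ℝ :=
    fun p => F ((p.2 : ℝ) • (p.1 : EuclideanSpace ℝ (Fin d))) with hG
  have hcomp : ∀ x : ({0}ᶜ : Set (EuclideanSpace ℝ (Fin d))),
      G (homeomorphUnitSphereProd _ x) = F x := by
    intro x
    have := congrArg Subtype.val ((homeomorphUnitSphereProd (EuclideanSpace ℝ (Fin d))).symm_apply_apply x)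
    rw [homeomorphUnitSphereProd_symm_apply_coe] at this
    simp only [hG, this]
  have h1 : ∫ w, F w = ∫ p, G p ∂((volume : Measure (EuclideanSpace ℝ (Fin d))).toSphere.prod
      (Measure.volumeIoiPow (d - 1))) := by
    rw [← mp.integral_comp (Homeomorph.measurableEmbedding _) G]
    simp only [hcomp]
    rw [integral_subtype_comap (measurableSet_singleton _).compl F]
    have : Nontrivial (EuclideanSpace ℝ (Fin d)) := by
      have : NeZero d := ⟨by omega⟩
      infer_instance
    rw [restrict_compl_singleton]
  have h2 : Integrable G ((volume : Measure (EuclideanSpace ℝ (Fin d))).toSphere.prod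
      (Measure.volumeIoiPow (d - 1))) := by
    rw [← mp.integrable_comp_emb (Homeomorph.measurableEmbedding _)]
    have : G ∘ (homeomorphUnitSphereProd (EuclideanSpace ℝ (Fin d))) = F ∘ Subtype.val :=
      funext hcomp
    rw [this, ← integrableOn_iff_comap_subtypeVal (measurableSet_singleton _).compl]
    exact hF.integrableOn
  rw [h1, integral_prod_symm _ h2]
  simp only [Measure.volumeIoiPow, ENNReal.ofReal]
  rw [integral_withDensity_eq_integral_smul,
    integral_subtype_comap measurableSet_Ioi fun a ↦ Real.toNNReal (a ^ (d - 1)) •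
      ∫ u : Metric.sphere (0 : EuclideanSpace ℝ (Fin d)) 1,
        F (a • (u : EuclideanSpace ℝ (Fin d)))
        ∂(volume : Measure (EuclideanSpace ℝ (Fin d))).toSphere,
    setIntegral_congr_fun measurableSet_Ioi fun x hx ↦ ?_]
  · simp only [NNReal.smul_def, Real.coe_toNNReal _ (pow_nonneg (le_of_lt hx) _), smul_eq_mul]
  · exact (measurable_subtype_coe.pow_const _).real_toNNReal

open Filter Topology in
lemma aux_peak (K : ℝ → ℝ) (hK : Continuous K) :
    Tendsto (fun n : ℕ => ∫ r in Set.Ioi (0:ℝ),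
      (2 * (n + 1 : ℝ) * r * deriv Real.smoothTransition ((n + 1 : ℝ) * (1 - r ^ 2))) * K r)
      atTop (𝓝 (K 1)) := by
  have hdiff : Differentiable ℝ Real.smoothTransition :=
    (Real.smoothTransition.contDiff (n := 1)).differentiable (by norm_num)
  have hcont : Continuous (deriv Real.smoothTransition) :=
    (Real.smoothTransition.contDiff (n := 1)).continuous_deriv (by norm_num)
  have hnn : ∀ s, 0 ≤ deriv Real.smoothTransition s := fun s =>
    Real.smoothTransition.monotone.deriv_nonneg
  have hz0 : ∀ s < 0, deriv Real.smoothTransition s = 0 := by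
    intro s hs
    have : Real.smoothTransition =ᶠ[𝓝 s] fun _ => 0 := by
      filter_upwards [Iio_mem_nhds hs] with t ht
      exact Real.smoothTransition.zero_of_nonpos (le_of_lt ht)
    rw [this.deriv_eq]; simp
  have hz1 : ∀ s > 1, deriv Real.smoothTransition s = 0 := by
    intro s hs
    have : Real.smoothTransition =ᶠ[𝓝 s] fun _ => 1 := by
      filter_upwards [Ioi_mem_nhds hs] with t ht
      exact Real.smoothTransition.one_of_one_le (le_of_lt ht)
    rw [this.deriv_eq]; simp
  have hred : ∀ n : ℕ, ∫ r in Set.Ioi (0:ℝ),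
      (2 * (n + 1 : ℝ) * r * deriv Real.smoothTransition ((n + 1 : ℝ) * (1 - r ^ 2))) * K r
      = ∫ r in Set.Ioc (0:ℝ) 1,
      (2 * (n + 1 : ℝ) * r * deriv Real.smoothTransition ((n + 1 : ℝ) * (1 - r ^ 2))) • K r := by
    intro n
    simp only [smul_eq_mul]
    apply setIntegral_eq_of_subset_of_forall_sdiff_eq_zero measurableSet_Ioi
      Set.Ioc_subset_Ioi_self
    intro r hr
    have h0 : 0 < r := hr.1
    have h1 : 1 < r := by
      by_contra h
      exact hr.2 ⟨h0, not_lt.mp h⟩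
    rw [hz0 _ (mul_neg_of_pos_of_neg (by positivity) (by nlinarith))]
    simp
  simp only [hred]
  have hphi : ∀ n : ℕ, Continuous fun r : ℝ =>
      2 * (n + 1 : ℝ) * r * deriv Real.smoothTransition ((n + 1 : ℝ) * (1 - r ^ 2)) := by
    intro n; fun_prop
  refine tendsto_setIntegral_peak_smul_of_integrableOn_of_tendsto (x₀ := (1:ℝ))
    (t := Set.Ioc (0:ℝ) 1) measurableSet_Ioc measurableSet_Ioc subset_rfl
    self_mem_nhdsWithin (by simp) ?_ ?_ ?_ ?_ ?_ ?_
  · refine Eventually.of_forall fun n r hr => ?_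
    have := hr.1
    have := hnn ((n + 1 : ℝ) * (1 - r ^ 2))
    positivity
  · intro u hu h1u
    obtain ⟨ε, hε, hb⟩ := Metric.isOpen_iff.1 hu 1 h1u
    rw [Metric.tendstoUniformlyOn_iff]
    intro η hη
    obtain ⟨N, hN⟩ := exists_nat_gt (1 / ε)
    filter_upwards [eventually_ge_atTop N] with n hn r hr
    have hr0 : 0 < r := hr.1.1
    have hr1 : r ≤ 1 := hr.1.2
    have hre : r ≤ 1 - ε := by
      by_contra h
      apply hr.2
      apply hb
      rw [Metric.mem_ball, Real.dist_eq, abs_lt]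
      constructor <;> linarith
    have hn' : (N:ℝ) ≤ n := by exact_mod_cast hn
    have h2 : 1 < (n + 1 : ℝ) * ε := by
      have := (div_lt_iff₀ hε).1 hN
      nlinarith
    have h3 : ε ≤ 1 - r ^ 2 := by nlinarith
    rw [hz1 _ (by have : (0:ℝ) < n + 1 := by positivity
                  nlinarith)]
    simpa using hη
  · refine tendsto_const_nhds.congr' ?_
    refine Eventually.of_forall fun n => ?_
    dsimp only
    rw [← intervalIntegral.integral_of_le zero_le_one]
    rw [intervalIntegral.integral_eq_sub_of_hasDerivAt
      (f := fun r : ℝ => - Real.smoothTransition ((n + 1 : ℝ) * (1 - r ^ 2)))]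
    · rw [Real.smoothTransition.one_of_one_le (x := (n + 1 : ℝ) * (1 - 0 ^ 2)) (by simp)]
      simp
    · intro r _
      have h1 : HasDerivAt (fun r : ℝ => (n + 1 : ℝ) * (1 - r ^ 2)) ((n + 1 : ℝ) * (-(2 * r))) r := by
        simpa using (((hasDerivAt_pow 2 r).const_sub 1).const_mul (n + 1 : ℝ))
      have h2 := ((hdiff _).hasDerivAt.comp r h1).neg
      have h3 : -(deriv Real.smoothTransition ((n + 1 : ℝ) * (1 - r ^ 2)) *
          ((n + 1 : ℝ) * -(2 * r))) = 2 * (n + 1 : ℝ) * r *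
          deriv Real.smoothTransition ((n + 1 : ℝ) * (1 - r ^ 2)) := by ring
      rw [h3] at h2
      exact h2
    · exact (hphi n).intervalIntegrable _ _
  · exact Eventually.of_forall fun n => (hphi n).aestronglyMeasurable
  · exact (hK.continuousOn.integrableOn_Icc (a := 0) (b := 1)).mono_set Set.Ioc_subset_Icc_self
  · exact (hK.tendsto 1).mono_left nhdsWithin_le_nhds

open Filter Topology in
lemma aux_div (d : ℕ) (hd : 1 ≤ d) (g : EuclideanSpace ℝ (Fin d) → ℝ) (hg : ContDiff ℝ 1 g)
    (v : EuclideanSpace ℝ (Fin d)) :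
    ∫ w in Metric.closedBall (0 : EuclideanSpace ℝ (Fin d)) 1, fderiv ℝ g w v =
      ∫ u : Metric.sphere (0 : EuclideanSpace ℝ (Fin d)) 1,
        inner ℝ (u : EuclideanSpace ℝ (Fin d)) v * g u
        ∂(volume : Measure (EuclideanSpace ℝ (Fin d))).toSphere := by
  have hdiff : Differentiable ℝ Real.smoothTransition :=
    (Real.smoothTransition.contDiff (n := 1)).differentiable (by norm_num)
  have hcont : Continuous (deriv Real.smoothTransition) :=
    (Real.smoothTransition.contDiff (n := 1)).continuous_deriv (by norm_num)
  have hgc : Continuous g := hg.continuous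
  have hgd : Differentiable ℝ g := hg.differentiable (by norm_num)
  have hg' : Continuous fun w => fderiv ℝ g w v :=
    (hg.continuous_fderiv (by norm_num)).clm_apply continuous_const
  set Φ : ℕ → EuclideanSpace ℝ (Fin d) → ℝ := fun n w =>
    Real.smoothTransition ((n + 1 : ℝ) * (1 - ‖w‖ ^ 2)) with hΦ
  have hΦ' : ∀ n w, HasFDerivAt (Φ n) ((deriv Real.smoothTransition ((n + 1 : ℝ) * (1 - ‖w‖ ^ 2))) •
      ((n + 1 : ℝ) • (-((2 : ℕ) • (innerSL ℝ w : EuclideanSpace ℝ (Fin d) →L[ℝ] ℝ))))) w := by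
    intro n w
    have h1 : HasFDerivAt (fun w : EuclideanSpace ℝ (Fin d) => (n + 1 : ℝ) * (1 - ‖w‖ ^ 2))
        ((n + 1 : ℝ) • (-((2 : ℕ) • (innerSL ℝ w : EuclideanSpace ℝ (Fin d) →L[ℝ] ℝ)))) w :=
      ((hasStrictFDerivAt_norm_sq w).hasFDerivAt.const_sub 1).const_mul (n + 1 : ℝ)
    exact (hdiff _).hasDerivAt.comp_hasFDerivAt w h1
  have hΦv : ∀ n w, fderiv ℝ (Φ n) w v =
      -(2 * (n + 1 : ℝ) * deriv Real.smoothTransition ((n + 1 : ℝ) * (1 - ‖w‖ ^ 2)) *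
        inner ℝ w v) := by
    intro n w
    rw [(hΦ' n w).fderiv]
    simp
    ring
  have hΦc : ∀ n, Continuous (Φ n) := by
    intro n
    simp only [hΦ]
    fun_prop
  have hΦvc : ∀ n, Continuous fun w => fderiv ℝ (Φ n) w v := by
    intro n
    simp only [hΦv]
    fun_prop
  have hΦ0 : ∀ n w, w ∉ Metric.closedBall (0 : EuclideanSpace ℝ (Fin d)) 1 → Φ n w = 0 := by
    intro n w hw
    have hw : 1 < ‖w‖ := by simpa using hw
    apply Real.smoothTransition.zero_of_nonpos
    have : (0:ℝ) < n + 1 := by positivity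
    have : 1 - ‖w‖ ^ 2 ≤ 0 := by nlinarith
    nlinarith
  have hsupp : ∀ n, HasCompactSupport (Φ n) := fun n =>
    HasCompactSupport.intro (isCompact_closedBall 0 1) (hΦ0 n)
  have hsupp' : ∀ n, HasCompactSupport (fun w => fderiv ℝ (Φ n) w v) := fun n =>
    (hsupp n).fderiv_apply ℝ v
  have hint' : ∀ n, Integrable (fun w => fderiv ℝ (Φ n) w v * g w) := fun n =>
    ((hΦvc n).mul hgc).integrable_of_hasCompactSupport (hsupp' n).mul_right
  have hibp : ∀ n, ∫ w, Φ n w * fderiv ℝ g w v = ∫ w, -(fderiv ℝ (Φ n) w v * g w) := by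
    intro n
    rw [integral_mul_fderiv_eq_neg_fderiv_mul_of_integrable (hint' n)
      (((hΦc n).mul hg').integrable_of_hasCompactSupport (hsupp n).mul_right)
      (((hΦc n).mul hgc).integrable_of_hasCompactSupport (hsupp n).mul_right)
      (fun x _ => (hΦ' n x).differentiableAt) (fun x _ => hgd x), integral_neg]
  set K : ℝ → ℝ := fun r => r ^ (d - 1) *
    ∫ u : Metric.sphere (0 : EuclideanSpace ℝ (Fin d)) 1,
      inner ℝ (u : EuclideanSpace ℝ (Fin d)) v * g (r • (u : EuclideanSpace ℝ (Fin d)))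
        ∂(volume : Measure (EuclideanSpace ℝ (Fin d))).toSphere with hK
  have hKc : Continuous K := by
    refine (continuous_id.pow _).mul ?_
    have := continuous_parametric_integral_of_continuous
      (μ := (volume : Measure (EuclideanSpace ℝ (Fin d))).toSphere)
      (f := fun (r : ℝ) (u : Metric.sphere (0 : EuclideanSpace ℝ (Fin d)) 1) =>
        inner ℝ (u : EuclideanSpace ℝ (Fin d)) v * g (r • (u : EuclideanSpace ℝ (Fin d))))
      (by simp only [Function.uncurry_def]; fun_prop) isCompact_univ
    simpa only [Measure.restrict_univ] using this
  have hlim := aux_peak K hKc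
  have heq : ∀ n : ℕ, ∫ r in Set.Ioi (0:ℝ),
      (2 * (n + 1 : ℝ) * r * deriv Real.smoothTransition ((n + 1 : ℝ) * (1 - r ^ 2))) * K r =
      ∫ w, Φ n w * fderiv ℝ g w v := by
    intro n
    have hneg : Integrable (fun w => -(fderiv ℝ (Φ n) w v * g w)) := (hint' n).neg
    rw [hibp, aux_polar d hd _ hneg]
    refine setIntegral_congr_fun measurableSet_Ioi fun r hr => ?_
    have hr : 0 < r := hr
    simp only [hK]
    rw [mul_left_comm, ← integral_const_mul]
    congr 1
    refine integral_congr_ae (Eventually.of_forall fun u => ?_)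
    have hu : ‖(u : EuclideanSpace ℝ (Fin d))‖ = 1 := by simp
    simp only [hΦv, norm_smul, hu, Real.norm_eq_abs, abs_of_pos hr, mul_one,
      real_inner_smul_left]
    ring
  simp only [heq] at hlim
  have hK1 : K 1 = ∫ u : Metric.sphere (0 : EuclideanSpace ℝ (Fin d)) 1,
        inner ℝ (u : EuclideanSpace ℝ (Fin d)) v * g u
        ∂(volume : Measure (EuclideanSpace ℝ (Fin d))).toSphere := by
    simp [hK]
  rw [hK1] at hlim
  refine tendsto_nhds_unique ?_ hlim
  have hball : ∫ w in Metric.closedBall (0 : EuclideanSpace ℝ (Fin d)) 1, fderiv ℝ g w v =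
      ∫ w in Metric.ball (0 : EuclideanSpace ℝ (Fin d)) 1, fderiv ℝ g w v := by
    have : Nontrivial (EuclideanSpace ℝ (Fin d)) := by
      have : NeZero d := ⟨by omega⟩
      infer_instance
    refine setIntegral_congr_set (Metric.ball_subset_closedBall.eventuallyLE.antisymm ?_).symm
    refine (ae_le_set).2 ?_
    rw [Metric.closedBall_sdiff_ball]
    exact Measure.addHaar_sphere _ _ _
  have hres : ∀ n, ∫ w, Φ n w * fderiv ℝ g w v =
      ∫ w in Metric.ball (0 : EuclideanSpace ℝ (Fin d)) 1, Φ n w * fderiv ℝ g w v := by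
    intro n
    symm
    apply setIntegral_eq_integral_of_forall_compl_eq_zero
    intro w hw
    have hw : 1 ≤ ‖w‖ := by simpa using hw
    have : Φ n w = 0 := by
      apply Real.smoothTransition.zero_of_nonpos
      have : (0:ℝ) < n + 1 := by positivity
      have : 1 - ‖w‖ ^ 2 ≤ 0 := by nlinarith
      nlinarith
    rw [this, zero_mul]
  rw [hball]
  simp only [hres]
  refine tendsto_integral_of_dominated_convergence (fun w => ‖fderiv ℝ g w v‖) ?_ ?_ ?_ ?_
  · exact fun n => ((hΦc n).mul hg').aestronglyMeasurable
  · exact ((hg'.norm.continuousOn.integrableOn_compact (isCompact_closedBall 0 1))).mono_set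
      Metric.ball_subset_closedBall
  · intro n
    refine Eventually.of_forall fun w => ?_
    rw [norm_mul]
    refine mul_le_of_le_one_left (norm_nonneg _) ?_
    rw [Real.norm_eq_abs, abs_of_nonneg (Real.smoothTransition.nonneg _)]
    exact Real.smoothTransition.le_one _
  · filter_upwards [ae_restrict_mem measurableSet_ball] with w hw
    have hw : ‖w‖ < 1 := by simpa using hw
    have hε : 0 < 1 - ‖w‖ ^ 2 := by nlinarith [norm_nonneg w]
    refine tendsto_const_nhds.congr' ?_
    obtain ⟨N, hN⟩ := exists_nat_gt (1 / (1 - ‖w‖ ^ 2))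
    filter_upwards [eventually_ge_atTop N] with n hn
    have hn' : (N:ℝ) ≤ n := by exact_mod_cast hn
    have : Φ n w = 1 := by
      apply Real.smoothTransition.one_of_one_le
      have := (div_lt_iff₀ hε).1 hN
      nlinarith
    rw [this, one_mul]

/-- Unbiasedness of the uniform smoothing gradient estimator for the smoothed function:
`f_β` is differentiable at every `x` with
`∇f_β(x) = E_{u ~ Unif(S)}[(d/β)(f(x + βu) − f(x)) u]`. -/
theorem uniform_smoothing_gradient_unbiased
    (d : ℕ) (hd : 1 ≤ d)
    (f : EuclideanSpace ℝ (Fin d) → ℝ)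
    (L : ℝ) (hL : 0 < L)
    (hdiff : Differentiable ℝ f)
    (hLip : ∀ u v, ‖gradient f u - gradient f v‖ ≤ L * ‖u - v‖)
    (β : ℝ) (hβ : 0 < β) :
    ∀ x : EuclideanSpace ℝ (Fin d),
      HasGradientAt (fun y => ∫ u, f (y + β • u) ∂(uniformUnitBall d))
        (∫ u : Metric.sphere (0 : EuclideanSpace ℝ (Fin d)) 1,
          (((d : ℝ) / β) * (f (x + β • (u : EuclideanSpace ℝ (Fin d))) - f x)) •
            (u : EuclideanSpace ℝ (Fin d)) ∂(uniformUnitSphere d)) x := by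
  intro x
  have hgradc : Continuous (gradient f) := by
    have : LipschitzWith (Real.toNNReal L) (gradient f) := by
      refine LipschitzWith.of_dist_le_mul fun u v => ?_
      rw [dist_eq_norm, dist_eq_norm, Real.coe_toNNReal _ hL.le]
      exact hLip u v
    exact this.continuous
  have hf' : Continuous (fderiv ℝ f) := by
    have : fderiv ℝ f = fun y => InnerProductSpace.toDual ℝ _ (gradient f y) := by
      funext y
      simp [gradient]
    rw [this]
    exact (InnerProductSpace.toDual ℝ _).continuous.comp hgradc
  have hfC : ContDiff ℝ 1 f := contDiff_one_iff_fderiv.2 ⟨hdiff, hf'⟩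
  have hfc : Continuous f := hdiff.continuous
  have : Nontrivial (EuclideanSpace ℝ (Fin d)) := by
    have : NeZero d := ⟨by omega⟩
    infer_instance
  set B := Metric.closedBall (0 : EuclideanSpace ℝ (Fin d)) 1 with hB
  have hBc : IsCompact B := isCompact_closedBall 0 1
  -- differentiation under the integral sign
  have hD : HasFDerivAt (fun y => ∫ u in B, f (y + β • u))
      (∫ u in B, fderiv ℝ f (x + β • u)) x := by
    obtain ⟨C, hC⟩ := (isCompact_closedBall x (1 + β)).exists_bound_of_continuousOn
      hf'.continuousOn
    refine hasFDerivAt_integral_of_dominated_of_fderiv_le (𝕜 := ℝ)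
      (F' := fun y u => fderiv ℝ f (y + β • u)) (bound := fun _ => C)
      (Metric.ball_mem_nhds x one_pos) ?_ ?_ ?_ ?_ ?_ ?_
    · exact Filter.Eventually.of_forall fun y =>
        Continuous.aestronglyMeasurable (by fun_prop)
    · exact (Continuous.continuousOn (by fun_prop)).integrableOn_compact hBc
    · exact Continuous.aestronglyMeasurable (by fun_prop)
    · filter_upwards [ae_restrict_mem Metric.isClosed_closedBall.measurableSet] with u hu y hy
      apply hC
      have hu : ‖u‖ ≤ 1 := by simpa [hB] using hu
      have hy : ‖y - x‖ < 1 := by simpa [dist_eq_norm] using hy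
      rw [Metric.mem_closedBall, dist_eq_norm]
      calc ‖y + β • u - x‖ = ‖(y - x) + β • u‖ := by congr 1; abel
        _ ≤ ‖y - x‖ + ‖β • u‖ := norm_add_le _ _
        _ ≤ 1 + β := by
          rw [norm_smul, Real.norm_eq_abs, abs_of_pos hβ]
          nlinarith
    · exact (continuous_const.continuousOn).integrableOn_compact hBc
    · refine Filter.Eventually.of_forall fun u y _ => ?_
      have h1 : HasFDerivAt (fun y => y + β • u) (ContinuousLinearMap.id ℝ _) y :=
        (hasFDerivAt_id y).add_const (β • u)
      exact (hdiff (y + β • u)).hasFDerivAt.comp y h1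
  -- the divergence identity
  set g : EuclideanSpace ℝ (Fin d) → ℝ := fun w => f (x + β • w) - f x with hg
  have hgC : ContDiff ℝ 1 g := by
    simp only [hg]
    fun_prop
  have hg' : ∀ w v, fderiv ℝ g w v = β * fderiv ℝ f (x + β • w) v := by
    intro w v
    have h1 : HasFDerivAt (fun w : EuclideanSpace ℝ (Fin d) => x + β • w)
        (β • ContinuousLinearMap.id ℝ _) w :=
      ((hasFDerivAt_id w).const_smul β).const_add x
    have h2 := ((hdiff (x + β • w)).hasFDerivAt.comp w h1).sub_const (f x)
    have h3 : fderiv ℝ g w = _ := h2.fderiv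
    rw [h3]
    simp
  have hvol : volume B = volume (Metric.ball (0 : EuclideanSpace ℝ (Fin d)) 1) :=
    Measure.addHaar_closedBall_eq_addHaar_ball _ _ _
  have hV : 0 < (volume B).toReal := by
    rw [hvol]
    exact ENNReal.toReal_pos (Metric.measure_ball_pos _ _ one_pos).ne' measure_ball_lt_top.ne
  rw [hasGradientAt_iff_hasFDerivAt]
  simp only [uniformUnitBall, uniformUnitSphere, integral_smul_measure,
    Measure.toSphere_apply_univ, ← hvol, ← hB, finrank_euclideanSpace_fin]
  have hfd := hD.const_smul (volume B)⁻¹.toReal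
  refine HasFDerivAt.congr_fderiv hfd ?_
  refine ContinuousLinearMap.ext fun v => ?_
  have hint1 : IntegrableOn (fun u => fderiv ℝ f (x + β • u)) B :=
    (Continuous.continuousOn (by fun_prop)).integrableOn_compact hBc
  have hint2 : Integrable (fun u : Metric.sphere (0 : EuclideanSpace ℝ (Fin d)) 1 =>
      (((d : ℝ) / β) * (f (x + β • (u : EuclideanSpace ℝ (Fin d))) - f x)) •
            (u : EuclideanSpace ℝ (Fin d)))
      (volume : Measure (EuclideanSpace ℝ (Fin d))).toSphere := by
    have hc : Continuous (fun u : Metric.sphere (0 : EuclideanSpace ℝ (Fin d)) 1 =>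
      (((d : ℝ) / β) * (f (x + β • (u : EuclideanSpace ℝ (Fin d))) - f x)) •
            (u : EuclideanSpace ℝ (Fin d))) := by fun_prop
    rw [← integrableOn_univ]
    exact hc.continuousOn.integrableOn_compact isCompact_univ
  have key := aux_div d hd g hgC v
  simp only [hg', integral_const_mul] at key
  rw [InnerProductSpace.toDual_apply_apply, real_inner_smul_left, real_inner_comm,
    ← integral_inner hint2]
  rw [smul_apply, ContinuousLinearMap.integral_apply hint1, smul_eq_mul]
  have hS : ∀ u : Metric.sphere (0 : EuclideanSpace ℝ (Fin d)) 1,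
      inner ℝ v ((((d : ℝ) / β) * (f (x + β • (u : EuclideanSpace ℝ (Fin d))) - f x)) •
            (u : EuclideanSpace ℝ (Fin d))) =
      ((d : ℝ) / β) * (inner ℝ (u : EuclideanSpace ℝ (Fin d)) v * g u) := by
    intro u
    rw [real_inner_smul_right, real_inner_comm]
    simp only [hg]
    ring
  simp only [hS, integral_const_mul]
  rw [← key, ← hB]
  have hd' : (d : ℝ) ≠ 0 := by
    have : d ≠ 0 := by omega
    exact_mod_cast this
  simp only [ENNReal.toReal_inv, ENNReal.toReal_mul, ENNReal.toReal_natCast]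
  field_simp
end

section
/- Master summed Frank–Wolfe gap bound: for every integer T ≥ 1, η ∑_{t=1}^{T−1} G(z_t) ≤ (f(z_0) − inf_{y∈X} f(y)) + 4 T L η² D² + 2ηD ∑_{t=0}^{T−1} ‖∇f(z_t) − v_t‖ + ηD ∑_{t=0}^{T−2} θ_t (∑_{i=t+1}^{T−1} 1/(i+2)) ‖∇f(z_t) − v_t‖. -/
open scoped RealInnerProductSpace

lemma fw_descent {d : ℕ} (f : EuclideanSpace ℝ (Fin d) → ℝ) (L : ℝ) (hL : 0 < L)
    (hdiff : Differentiable ℝ f)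
    (hLip : ∀ u v', ‖gradient f u - gradient f v'‖ ≤ L * ‖u - v'‖)
    (a b : EuclideanSpace ℝ (Fin d)) :
    f b ≤ f a + ⟪gradient f a, b - a⟫ + L * ‖b - a‖ ^ 2 := by
  have key := (convex_segment (𝕜 := ℝ) a b).norm_image_sub_le_of_norm_hasFDerivWithin_le'
    (f := f) (f' := fun u => (InnerProductSpace.toDual ℝ _) (gradient f u))
    (φ := (InnerProductSpace.toDual ℝ _) (gradient f a)) (C := L * ‖b - a‖)
    (fun u _ => ((hdiff u).hasGradientAt.hasFDerivAt).hasFDerivWithinAt)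
    (fun u hu => by
      rw [← map_sub, LinearIsometryEquiv.norm_map]
      refine (hLip u a).trans ?_
      have : ‖u - a‖ ≤ ‖b - a‖ := by
        obtain ⟨p, q, hp, hq, hpq, rfl⟩ := hu
        have : p • a + q • b - a = q • (b - a) := by
          have : p = 1 - q := by linarith
          subst this
          module
        rw [this, norm_smul, Real.norm_of_nonneg hq]
        have := norm_nonneg (b - a)
        nlinarith
      gcongr)
    (left_mem_segment ℝ a b) (right_mem_segment ℝ a b)
  rw [InnerProductSpace.toDual_apply_apply] at key
  have := (Real.le_norm_self _).trans key
  nlinarith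

lemma fw_scaled {d : ℕ} (η : ℝ) (hη : 0 < η) (hη1 : η < 1)
    (x w δ : ℕ → EuclideanSpace ℝ (Fin d))
    (hδ : ∀ t : ℕ, ((t : ℝ) + 1) • δ (t + 1)
      = (1 - η) • ((t : ℝ) • δ t) + (η / ((t : ℝ) + 2)) • (w t - x t))
    (g : EuclideanSpace ℝ (Fin d)) (b : ℕ → ℝ) (t : ℕ)
    (hb0 : ∀ s < t, 0 ≤ b s)
    (hb : ∀ s < t, ⟪g, w s - x s⟫ ≤ b s) :
    ⟪g, (t : ℝ) • δ t⟫ ≤ η * ∑ s ∈ Finset.range t, b s / ((s : ℝ) + 2) := by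
  induction t with
  | zero => simp
  | succ t ih =>
    have ih := ih (fun s hs => hb0 s (by omega)) (fun s hs => hb s (by omega))
    push_cast
    rw [hδ, inner_add_right, inner_smul_right, inner_smul_right (r := η / ((t : ℝ) + 2)),
      Finset.sum_range_succ]
    have h1 := hb t (by omega)
    have hS : 0 ≤ ∑ s ∈ Finset.range t, b s / ((s : ℝ) + 2) :=
      Finset.sum_nonneg fun s hs => div_nonneg (hb0 s (by
        have := Finset.mem_range.1 hs
        omega)) (by positivity)
    have h2 : η / ((t : ℝ) + 2) * ⟪g, w t - x t⟫ ≤ η / ((t : ℝ) + 2) * b t := by gcongr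
    have h3 : (1 - η) * ⟪g, (t : ℝ) • δ t⟫
        ≤ (1 - η) * (η * ∑ s ∈ Finset.range t, b s / ((s : ℝ) + 2)) :=
      mul_le_mul_of_nonneg_left ih (by linarith)
    have h4 : 0 ≤ η * (η * ∑ s ∈ Finset.range t, b s / ((s : ℝ) + 2)) := by positivity
    have h5 : η / ((t : ℝ) + 2) * b t = η * (b t / ((t : ℝ) + 2)) := by ring
    rw [h5] at h2
    linarith

lemma fw_scaled_norm {d : ℕ} (η D : ℝ) (hη : 0 < η) (hη1 : η < 1) (hD : 0 < D)
    (x w δ : ℕ → EuclideanSpace ℝ (Fin d))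
    (hδ : ∀ t : ℕ, ((t : ℝ) + 1) • δ (t + 1)
      = (1 - η) • ((t : ℝ) • δ t) + (η / ((t : ℝ) + 2)) • (w t - x t))
    (hwx : ∀ t, ‖w t - x t‖ ≤ D) (t : ℕ) :
    ‖(t : ℝ) • δ t‖ ≤ η * D * t / 2 := by
  induction t with
  | zero => simp
  | succ t ih =>
    push_cast
    rw [hδ]
    refine (norm_add_le _ _).trans ?_
    rw [norm_smul, norm_smul (η / ((t : ℝ) + 2)), Real.norm_of_nonneg (by linarith : 0 ≤ 1 - η),
      Real.norm_of_nonneg (by positivity : 0 ≤ η / ((t : ℝ) + 2))]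
    have h1 : η / ((t : ℝ) + 2) ≤ η / 2 := by
      gcongr
      linarith [(Nat.cast_nonneg t : (0 : ℝ) ≤ t)]
    have h2 : η / ((t : ℝ) + 2) * ‖w t - x t‖ ≤ η / 2 * D := by
      gcongr
      exact hwx t
    have h3 := norm_nonneg ((t : ℝ) • δ t)
    nlinarith

lemma fw_sum_swap (c a : ℕ → ℝ) (T : ℕ) :
    ∑ t ∈ Finset.range T, c t * ∑ s ∈ Finset.range (t + 1), a s
      = ∑ s ∈ Finset.range T, a s * ∑ i ∈ Finset.Ico s T, c i := by
  induction T with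
  | zero => simp
  | succ T ih =>
    rw [Finset.sum_range_succ, ih]
    have : ∀ s ∈ Finset.range (T + 1), a s * ∑ i ∈ Finset.Ico s (T + 1), c i
        = a s * ∑ i ∈ Finset.Ico s T, c i + c T * a s := by
      intro s hs
      rw [Finset.sum_Ico_succ_top (by
        have := Finset.mem_range.1 hs
        omega)]
      ring
    rw [Finset.sum_congr rfl this, Finset.sum_add_distrib, ← Finset.mul_sum]
    congr 1
    rw [Finset.sum_range_succ (fun s => a s * ∑ i ∈ Finset.Ico s T, c i)]
    simp

/-- Master summed Frank–Wolfe gap bound for the momentum Frank–Wolfe iterates. -/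
theorem momentum_fw_master_gap_bound
    (d : ℕ) (hd : 1 ≤ d)
    (X : Set (EuclideanSpace ℝ (Fin d))) (hXne : X.Nonempty)
    (hXcomp : IsCompact X) (hXconv : Convex ℝ X)
    (D : ℝ) (hD : 0 < D)
    (hdiam : ∀ u ∈ X, ∀ v ∈ X, ‖u - v‖ ≤ D)
    (f : EuclideanSpace ℝ (Fin d) → ℝ)
    (L : ℝ) (hL : 0 < L)
    (hdiff : Differentiable ℝ f)
    (hLip : ∀ u v', ‖gradient f u - gradient f v'‖ ≤ L * ‖u - v'‖)
    (η : ℝ) (hη : 0 < η) (hη23 : η < 2 / 3)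
    (x y z w v : ℕ → EuclideanSpace ℝ (Fin d))
    (hx0 : x 0 = z 0) (hy0 : y 0 = z 0) (hz0 : z 0 ∈ X)
    (hwX : ∀ t, w t ∈ X)
    (hwopt : ∀ t, ∀ w' ∈ X, ⟪w', -(v t)⟫ ≤ ⟪w t, -(v t)⟫)
    (hxrec : ∀ t : ℕ, x (t + 1)
      = x t + ((1 + 1 / (((t : ℝ) + 1) * ((t : ℝ) + 2))) * η) • (w t - x t))
    (hyrec : ∀ t : ℕ, y (t + 1) = z t + η • (w t - z t))
    (hzrec : ∀ t : ℕ, z (t + 1)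
      = (1 - 1 / ((t : ℝ) + 2)) • y (t + 1) + (1 / ((t : ℝ) + 2)) • x (t + 1))
    (T : ℕ) (hT : 1 ≤ T) :
    η * ∑ t ∈ Finset.Ico 1 T, fwGap f X (z t)
      ≤ (f (z 0) - sInf (f '' X)) + 4 * T * L * η ^ 2 * D ^ 2
        + 2 * η * D * ∑ t ∈ Finset.range T, ‖gradient f (z t) - v t‖
        + η * D * ∑ t ∈ Finset.range (T - 1),
            (1 / (((t : ℝ) + 1) * ((t : ℝ) + 2))) *
              (∑ i ∈ Finset.Ico (t + 1) T, 1 / ((i : ℝ) + 2)) *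
              ‖gradient f (z t) - v t‖ := by
  have hcast : ∀ t : ℕ, (0 : ℝ) ≤ t := fun t => Nat.cast_nonneg t
  have hθ : ∀ t : ℕ, 1 / (((t : ℝ) + 1) * ((t : ℝ) + 2)) ≤ 1 / 2 := by
    intro t
    apply one_div_le_one_div_of_le (by norm_num)
    nlinarith [hcast t]
  have hθ0 : ∀ t : ℕ, 0 ≤ 1 / (((t : ℝ) + 1) * ((t : ℝ) + 2)) := fun t => by positivity
  have hη1 : η < 1 := by linarith
  have hmix : ∀ a ∈ X, ∀ b ∈ X, ∀ r : ℝ, 0 ≤ r → r ≤ 1 → a + r • (b - a) ∈ X := by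
    intro a ha b hb r h0 h1
    have := hXconv ha hb (by linarith : 0 ≤ 1 - r) h0 (by ring)
    convert this using 1
    module
  have hxX : ∀ t, x t ∈ X := by
    intro t
    induction t with
    | zero => rw [hx0]; exact hz0
    | succ t ih =>
      rw [hxrec]
      refine hmix _ ih _ (hwX t) _ (by have := hθ0 t; positivity) ?_
      nlinarith [hθ t, hθ0 t]
  have hzX : ∀ t, z t ∈ X := by
    intro t
    induction t with
    | zero => exact hz0
    | succ t ih =>
      have hy : y (t + 1) ∈ X := by
        rw [hyrec]; exact hmix _ ih _ (hwX t) _ hη.le hη1.le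
      rw [hzrec]
      have h1 : 1 / ((t : ℝ) + 2) ≤ 1 := by
        rw [div_le_one (by positivity)]
        linarith [hcast t]
      exact hXconv hy (hxX (t + 1)) (by linarith) (by positivity) (by ring)
  -- the deviation between the two sequences
  let δ : ℕ → EuclideanSpace ℝ (Fin d) := fun t => x t - y t
  have hxz : ∀ t : ℕ, ((t : ℝ) + 1) • (x t - z t) = (t : ℝ) • δ t := by
    intro t
    cases t with
    | zero => simp [hx0]
    | succ t =>
      rw [hzrec]
      simp only [δ]
      push_cast
      have h2 : (t : ℝ) + 2 ≠ 0 := by positivity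
      match_scalars <;> field_simp <;> ring
  have hδ : ∀ t : ℕ, ((t : ℝ) + 1) • δ (t + 1)
      = (1 - η) • ((t : ℝ) • δ t) + (η / ((t : ℝ) + 2)) • (w t - x t) := by
    intro t
    rw [← hxz]
    simp only [δ]
    rw [hxrec, hyrec]
    have h1 : (t : ℝ) + 1 ≠ 0 := by positivity
    have h2 : (t : ℝ) + 2 ≠ 0 := by positivity
    match_scalars <;> field_simp <;> ring
  have hwx : ∀ t, ‖w t - x t‖ ≤ D := fun t => hdiam _ (hwX t) _ (hxX t)
  have hδn : ∀ t : ℕ, ‖δ (t + 1)‖ ≤ η * D / 2 := by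
    intro t
    have h := fw_scaled_norm η D hη hη1 hD x w δ hδ hwx (t + 1)
    rw [norm_smul, Real.norm_of_nonneg (hcast _)] at h
    have hp : (0 : ℝ) < ((t + 1 : ℕ) : ℝ) := by positivity
    refine le_of_mul_le_mul_left (h.trans_eq ?_) hp
    ring
  have hzstep : ∀ t : ℕ, z (t + 1) - z t = η • (w t - z t) + (1 / ((t : ℝ) + 2)) • δ (t + 1) := by
    intro t
    rw [hzrec]
    simp only [δ]
    rw [hyrec]
    module
  have hstepn : ∀ t : ℕ, ‖z (t + 1) - z t‖ ≤ 5 / 4 * (η * D) := by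
    intro t
    rw [hzstep]
    refine (norm_add_le _ _).trans ?_
    rw [norm_smul, norm_smul, Real.norm_of_nonneg hη.le,
      Real.norm_of_nonneg (by positivity : 0 ≤ 1 / ((t : ℝ) + 2))]
    have h1 : η * ‖w t - z t‖ ≤ η * D := by
      gcongr
      exact hdiam _ (hwX t) _ (hzX t)
    have h2 : 1 / ((t : ℝ) + 2) ≤ 1 / 2 := by
      apply one_div_le_one_div_of_le (by norm_num)
      linarith [hcast t]
    have h3 : 1 / ((t : ℝ) + 2) * ‖δ (t + 1)‖ ≤ 1 / 2 * (η * D / 2) := by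
      gcongr
      exact hδn t
    linarith
  have hdist : ∀ s k : ℕ, ‖z (s + k) - z s‖ ≤ k * (5 / 4 * (η * D)) := by
    intro s k
    induction k with
    | zero => simp
    | succ k ih =>
      have h1 := hstepn (s + k)
      have h2 : z (s + (k + 1)) - z s = (z (s + k + 1) - z (s + k)) + (z (s + k) - z s) := by
        rw [← add_assoc]; abel
      rw [h2]
      refine (norm_add_le _ _).trans ?_
      push_cast
      linarith
  set e : ℕ → ℝ := fun t => ‖gradient f (z t) - v t‖ with he
  have he0 : ∀ t, 0 ≤ e t := fun t => norm_nonneg _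
  have hvopt : ∀ t, ∀ u ∈ X, ⟪v t, w t - u⟫ ≤ 0 := by
    intro t u hu
    have := hwopt t u hu
    rw [inner_neg_right, inner_neg_right, real_inner_comm, real_inner_comm (v t) (w t)] at this
    rw [inner_sub_right]
    linarith
  have hgapN : ∀ t, 0 ≤ fwGap f X (z t) := by
    intro t
    have hbdd : BddAbove ((fun w => ⟪w - z t, -gradient f (z t)⟫) '' X) :=
      (hXcomp.image (by fun_prop)).bddAbove
    exact le_csSup hbdd ⟨z t, hzX t, by simp⟩
  have hgap : ∀ t, ⟪gradient f (z t), w t - z t⟫ ≤ - fwGap f X (z t) + D * e t := by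
    intro t
    have : fwGap f X (z t) ≤ D * e t - ⟪gradient f (z t), w t - z t⟫ := by
      apply csSup_le (hXne.image _)
      rintro _ ⟨u, hu, rfl⟩
      have h1 := hvopt t u hu
      have h2 : ⟪gradient f (z t) - v t, w t - u⟫ ≤ e t * D :=
        (real_inner_le_norm _ _).trans (by
          have := hdiam _ (hwX t) u hu
          have := he0 t
          gcongr)
      simp only
      rw [inner_neg_right, real_inner_comm]
      simp only [inner_sub_left, inner_sub_right] at *
      linarith
    linarith
  have hcross : ∀ t : ℕ, ⟪gradient f (z t), δ (t + 1)⟫ ≤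
      η * D * (∑ s ∈ Finset.range (t + 1), 1 / (((s : ℝ) + 1) * ((s : ℝ) + 2)) * e s)
        + 5 / 8 * L * η ^ 2 * D ^ 2 * (t + 1) := by
    intro t
    have h := fw_scaled η hη hη1 x w δ hδ (gradient f (z t))
      (fun s => D * e s + L * D * (((t : ℝ) + 1) * (5 / 4 * (η * D)))) (t + 1)
      (fun s _ => by have := he0 s; positivity)
      (fun s hs => by
        have h1 := hvopt s (x s) (hxX s)
        have h2 : ⟪gradient f (z s) - v s, w s - x s⟫ ≤ e s * D :=
          (real_inner_le_norm _ _).trans (by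
            have := hwx s
            have := he0 s
            gcongr)
        have h3 : ‖z t - z s‖ ≤ ((t : ℝ) + 1) * (5 / 4 * (η * D)) := by
          have h4 := hdist s (t - s)
          rw [Nat.add_sub_cancel' (by omega)] at h4
          refine h4.trans ?_
          have h5 : ((t - s : ℕ) : ℝ) ≤ (t : ℝ) + 1 := by
            exact_mod_cast (by omega : t - s ≤ t + 1)
          gcongr
        have h6 : ⟪gradient f (z t) - gradient f (z s), w s - x s⟫
            ≤ (L * (((t : ℝ) + 1) * (5 / 4 * (η * D)))) * D :=
          (real_inner_le_norm _ _).trans (by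
            have h7 : ‖gradient f (z t) - gradient f (z s)‖
              ≤ L * (((t : ℝ) + 1) * (5 / 4 * (η * D))) :=
              (hLip _ _).trans (by gcongr)
            have := hwx s
            gcongr)
        simp only [inner_sub_left] at *
        linarith)
    rw [inner_smul_right] at h
    push_cast at h
    have hp : (0 : ℝ) < (t : ℝ) + 1 := by positivity
    refine le_of_mul_le_mul_left (h.trans ?_) hp
    have hterm : ∑ s ∈ Finset.range (t + 1),
        (D * e s + L * D * (((t : ℝ) + 1) * (5 / 4 * (η * D)))) / ((s : ℝ) + 2)
        ≤ ∑ s ∈ Finset.range (t + 1),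
          (((t : ℝ) + 1) * D * (1 / (((s : ℝ) + 1) * ((s : ℝ) + 2)) * e s)
            + ((t : ℝ) + 1) * (5 / 8 * L * η * D ^ 2)) := by
      apply Finset.sum_le_sum
      intro s hs
      have hs' : (s : ℝ) ≤ t := by
        have := Finset.mem_range.1 hs
        exact_mod_cast (by omega : s ≤ t)
      rw [add_div]
      have hs0 := hcast s
      refine add_le_add ?_ ?_
      · have h1 : D * e s / ((s : ℝ) + 2)
            = ((s : ℝ) + 1) * D * (1 / (((s : ℝ) + 1) * ((s : ℝ) + 2)) * e s) := by
          have : (s : ℝ) + 1 ≠ 0 := by positivity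
          field_simp
        rw [h1]
        have := he0 s
        gcongr
      · rw [div_le_iff₀ (by positivity)]
        have : 0 ≤ ((t : ℝ) + 1) * (5 / 8 * L * η * D ^ 2) := by positivity
        nlinarith
    rw [Finset.sum_add_distrib, ← Finset.mul_sum, Finset.sum_const, Finset.card_range,
      nsmul_eq_mul] at hterm
    have := mul_le_mul_of_nonneg_left hterm hη.le
    refine this.trans_eq ?_
    push_cast
    ring
  have hstep : ∀ t : ℕ, f (z (t + 1)) ≤ f (z t) - η * fwGap f X (z t) + η * D * e t
      + η * D * (1 / ((t : ℝ) + 2) *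
          ∑ s ∈ Finset.range (t + 1), 1 / (((s : ℝ) + 1) * ((s : ℝ) + 2)) * e s)
      + 4 * L * η ^ 2 * D ^ 2 := by
    intro t
    have h1 := fw_descent f L hL hdiff hLip (z t) (z (t + 1))
    have h2 : L * ‖z (t + 1) - z t‖ ^ 2 ≤ L * (5 / 4 * (η * D)) ^ 2 := by
      have := hstepn t
      gcongr
    have h3 : ⟪gradient f (z t), z (t + 1) - z t⟫
        = η * ⟪gradient f (z t), w t - z t⟫
          + 1 / ((t : ℝ) + 2) * ⟪gradient f (z t), δ (t + 1)⟫ := by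
      rw [hzstep, inner_add_right, inner_smul_right, inner_smul_right]
    have h4 := mul_le_mul_of_nonneg_left (hgap t) hη.le
    have h5 := mul_le_mul_of_nonneg_left (hcross t)
      (by positivity : 0 ≤ 1 / ((t : ℝ) + 2))
    have h6 : 1 / ((t : ℝ) + 2) * (5 / 8 * L * η ^ 2 * D ^ 2 * (t + 1))
        ≤ 5 / 8 * L * η ^ 2 * D ^ 2 := by
      rw [one_div_mul_eq_div, div_le_iff₀ (by positivity)]
      have : 0 ≤ 5 / 8 * L * η ^ 2 * D ^ 2 := by positivity
      nlinarith
    have h7 : 0 ≤ L * η ^ 2 * D ^ 2 := by positivity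
    rw [mul_add] at h5
    rw [h3] at h1
    nlinarith
  have htele : ∀ n : ℕ, η * ∑ t ∈ Finset.range n, fwGap f X (z t) + f (z n)
      ≤ f (z 0) + 4 * n * L * η ^ 2 * D ^ 2 + η * D * ∑ t ∈ Finset.range n, e t
        + η * D * ∑ t ∈ Finset.range n, (1 / ((t : ℝ) + 2) *
          ∑ s ∈ Finset.range (t + 1), 1 / (((s : ℝ) + 1) * ((s : ℝ) + 2)) * e s) := by
    intro n
    induction n with
    | zero => simp
    | succ n ih =>
      have := hstep n
      rw [Finset.sum_range_succ, Finset.sum_range_succ, Finset.sum_range_succ _ n]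
      push_cast
      linarith
  have hinf : sInf (f '' X) ≤ f (z T) :=
    csInf_le (hXcomp.image hdiff.continuous).bddBelow ⟨z T, hzX T, rfl⟩
  have hfin := htele T
  rw [fw_sum_swap (fun t => 1 / ((t : ℝ) + 2))
    (fun s => 1 / (((s : ℝ) + 1) * ((s : ℝ) + 2)) * e s) T] at hfin
  have hG : ∑ t ∈ Finset.Ico 1 T, fwGap f X (z t) ≤ ∑ t ∈ Finset.range T, fwGap f X (z t) := by
    apply Finset.sum_le_sum_of_subset_of_nonneg
    · intro t ht
      have := Finset.mem_Ico.1 ht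
      exact Finset.mem_range.2 this.2
    · intro t _ _
      exact hgapN t
  have hS : ∑ s ∈ Finset.range T, 1 / (((s : ℝ) + 1) * ((s : ℝ) + 2)) * e s *
        ∑ i ∈ Finset.Ico s T, 1 / ((i : ℝ) + 2)
      ≤ ∑ t ∈ Finset.range T, e t + ∑ t ∈ Finset.range (T - 1),
            (1 / (((t : ℝ) + 1) * ((t : ℝ) + 2))) *
              (∑ i ∈ Finset.Ico (t + 1) T, 1 / ((i : ℝ) + 2)) * e t := by
    have hlast : ∑ t ∈ Finset.range (T - 1),
            (1 / (((t : ℝ) + 1) * ((t : ℝ) + 2))) *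
              (∑ i ∈ Finset.Ico (t + 1) T, 1 / ((i : ℝ) + 2)) * e t
        = ∑ t ∈ Finset.range T,
            (1 / (((t : ℝ) + 1) * ((t : ℝ) + 2))) *
              (∑ i ∈ Finset.Ico (t + 1) T, 1 / ((i : ℝ) + 2)) * e t := by
      obtain ⟨n, rfl⟩ : ∃ n, T = n + 1 := ⟨T - 1, by omega⟩
      rw [Finset.sum_range_succ]
      simp
    rw [hlast, ← Finset.sum_add_distrib]
    apply Finset.sum_le_sum
    intro s hs
    rw [Finset.sum_eq_sum_Ico_succ_bot (Finset.mem_range.1 hs)]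
    have h1 : 1 / ((s : ℝ) + 2) ≤ 1 := by
      rw [div_le_one (by positivity)]
      linarith [hcast s]
    have h2 : 1 / (((s : ℝ) + 1) * ((s : ℝ) + 2)) * (1 / ((s : ℝ) + 2)) ≤ 1 :=
      mul_le_one₀ ((hθ s).trans (by norm_num)) (by positivity) h1
    have h3 := mul_le_mul_of_nonneg_right h2 (he0 s)
    linarith
  have hG' := mul_le_mul_of_nonneg_left hG hη.le
  have hS' := mul_le_mul_of_nonneg_left hS (by positivity : 0 ≤ η * D)
  rw [mul_add] at hS'
  linarith
end
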